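/- Let Π be a DatalogMTL program and D a dataset such that T_Π(ℑ_D) = ℑ_D (no rule of Π derives anything new from the least model of D), and let E be a set of facts each of whose intervals is (−∞,+∞). Put Π′ = Π ∪ swap(E) and D′ = D ∪ E. Let ℑ₀,ℑ₁,… be the iterates of (Π′,D) (ℑ₀ = ℑ_D, ℑ_{i+1} = T_{Π′}(ℑ_i)) and ℑ′₀,ℑ′₁,… the iterates of (Π′,D′). Then ℑ′_i = ℑ_{i+1} for every i ≥ 0. -/

import Mathlib

/-!
Once `ℑ'₀ = ℑ₁` is known, both sequences iterate the same operator `T_{P ∪ swap(E)}`, so they stay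
equal up to the shift; the content is the identity `ℑ_{D ∪ E} = T_{P ∪ swap(E)}(ℑ_D)`
(`leastModel_union_eq_TP`).

* `⊆`: atoms coming from `D` are kept by the operator, and an atom coming from a fact `g ∈ E` is
  derived at every time point by the rule `toRule g`, whose body `⊤` always holds.
* `⊇`: it suffices that `ℑ_{D ∪ E}` is one of the interpretations over which `T` takes the
  intersection. The heads of `swap(E)` hold in it because the facts of `E` hold at all times. If
  the body of an instance of a rule of `P` holds in `ℑ_D`, then its head holds in
  `T_P(ℑ_D) = ℑ_D`, hence in the larger `ℑ_{D ∪ E}`.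

The last step needs that `T_P(ℑ)` really satisfies the derived heads (`satAt_head_TP`). This is where
legality of heads enters: head atoms are built from `⊤`, relational atoms and boxes only, so their
satisfaction is preserved by intersections of interpretations. It is also monotone (`satAt_mono`).
-/

/-! # DatalogMTL: syntax, semantics, and the magic-set rewriting -/

/-- Terms: variables and constants (names are strings). -/
inductive Term where
  | var (v : String)
  | const (c : String)
deriving DecidableEq

/-- An adornment is a list of booleans (`true` = bound `b`, `false` = free `f`). -/
abbrev Adornment := List Bool

/-- Predicates: the base predicates of the input, adorned predicates `R^γ`
(used during the rewriting), and the fresh magic predicates `m_R^γ`. -/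
inductive PredSym where
  | base (name : String)
  | adorned (name : String) (γ : Adornment)
  | magic (name : String) (γ : Adornment)
deriving DecidableEq

/-- An interval of rationals, given by optional endpoints (`none` = infinite)
and openness flags. -/
structure Ivl where
  lo : Option ℚ
  hi : Option ℚ
  loOpen : Bool
  hiOpen : Bool
deriving DecidableEq

namespace Ivl

/-- membership of a time point in an interval -/
def mem (t : ℚ) (ρ : Ivl) : Prop :=
  (match ρ.lo with
   | none => True
   | some a => if ρ.loOpen then a < t else a ≤ t) ∧
  (match ρ.hi with
   | none => True
   | some b => if ρ.hiOpen then t < b else t ≤ b)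

/-- the punctual interval `[t,t]` -/
def punctual (t : ℚ) : Ivl := ⟨some t, some t, false, false⟩

/-- the interval `(-∞, +∞)` -/
def all : Ivl := ⟨none, none, true, true⟩

/-- nonemptiness of an interval -/
def NE (ρ : Ivl) : Prop := ∃ t, ρ.mem t

/-- an interval containing only non-negative rationals -/
def Nonneg (ρ : Ivl) : Prop := ∀ t, ρ.mem t → 0 ≤ t

/-- a bounded interval (both endpoints rational) -/
def Bounded (ρ : Ivl) : Prop := ρ.lo.isSome ∧ ρ.hi.isSome

end Ivl

/-- Metric atoms. -/
inductive MAtom where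
  | top
  | bot
  | rel (p : PredSym) (ts : List Term)
  | boxPlus (ρ : Ivl) (M : MAtom)
  | boxMinus (ρ : Ivl) (M : MAtom)
  | diaPlus (ρ : Ivl) (M : MAtom)
  | diaMinus (ρ : Ivl) (M : MAtom)
  | until_ (ρ : Ivl) (M₂ M₁ : MAtom)
  | since_ (ρ : Ivl) (M₂ M₁ : MAtom)
deriving DecidableEq

namespace Term

def vars : Term → List String
  | .var v => [v]
  | .const _ => []

end Term

namespace MAtom

/-- variables occurring in a metric atom -/
def vars : MAtom → List String
  | .top | .bot => []
  | .rel _ ts => ts.flatMap Term.vars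
  | .boxPlus _ M | .boxMinus _ M | .diaPlus _ M | .diaMinus _ M => M.vars
  | .until_ _ M₂ M₁ | .since_ _ M₂ M₁ => M₂.vars ++ M₁.vars

/-- predicates occurring in a metric atom -/
def preds : MAtom → List PredSym
  | .top | .bot => []
  | .rel p _ => [p]
  | .boxPlus _ M | .boxMinus _ M | .diaPlus _ M | .diaMinus _ M => M.preds
  | .until_ _ M₂ M₁ | .since_ _ M₂ M₁ => M₂.preds ++ M₁.preds

/-- intervals mentioned by the MTL operators of a metric atom -/
def ivls : MAtom → List Ivl
  | .top | .bot | .rel _ _ => []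
  | .boxPlus ρ M | .boxMinus ρ M | .diaPlus ρ M | .diaMinus ρ M => ρ :: M.ivls
  | .until_ ρ M₂ M₁ | .since_ ρ M₂ M₁ => ρ :: (M₂.ivls ++ M₁.ivls)

/-- a metric atom legal as a rule head: mentions no `⊥`, `◇⁺`, `◇⁻`, `U`, `S` -/
def headOK : MAtom → Prop
  | .top => True
  | .bot => False
  | .rel _ _ => True
  | .boxPlus _ M => M.headOK
  | .boxMinus _ M => M.headOK
  | .diaPlus _ _ | .diaMinus _ _ | .until_ _ _ _ | .since_ _ _ _ => False

/-- well-formedness: all operator intervals are nonempty and contain only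
non-negative rationals -/
def WF : MAtom → Prop
  | .top | .bot | .rel _ _ => True
  | .boxPlus ρ M | .boxMinus ρ M | .diaPlus ρ M | .diaMinus ρ M =>
      ρ.NE ∧ ρ.Nonneg ∧ M.WF
  | .until_ ρ M₂ M₁ | .since_ ρ M₂ M₁ => ρ.NE ∧ ρ.Nonneg ∧ M₂.WF ∧ M₁.WF

/-- applying a substitution (mapping variables to constants) to a metric atom -/
def subst (σ : String → String) : MAtom → MAtom
  | .top => .top
  | .bot => .bot
  | .rel p ts =>
      .rel p (ts.map fun tm => match tm with
        | .var v => .const (σ v)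
        | .const c => .const c)
  | .boxPlus ρ M => .boxPlus ρ (M.subst σ)
  | .boxMinus ρ M => .boxMinus ρ (M.subst σ)
  | .diaPlus ρ M => .diaPlus ρ (M.subst σ)
  | .diaMinus ρ M => .diaMinus ρ (M.subst σ)
  | .until_ ρ M₂ M₁ => .until_ ρ (M₂.subst σ) (M₁.subst σ)
  | .since_ ρ M₂ M₁ => .since_ ρ (M₂.subst σ) (M₁.subst σ)

/-- an atom without MTL operators -/
def isBasic : MAtom → Prop
  | .top | .bot | .rel _ _ => True
  | _ => False

/-- no nested MTL operators -/
def nonNested : MAtom → Prop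
  | .top | .bot | .rel _ _ => True
  | .boxPlus _ M | .boxMinus _ M | .diaPlus _ M | .diaMinus _ M => M.isBasic
  | .until_ _ M₂ M₁ | .since_ _ M₂ M₁ => M₂.isBasic ∧ M₁.isBasic

/-- a normal-form head: `⊞_ϱ R(s)` or `⊟_ϱ R(s)` -/
def headNF : MAtom → Prop
  | .boxPlus _ (.rel _ _) => True
  | .boxMinus _ (.rel _ _) => True
  | _ => False

/-- whether a magic predicate occurs in the atom -/
def containsMagic (M : MAtom) : Prop :=
  ∃ p ∈ M.preds, ∃ n γ, p = PredSym.magic n γ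

end MAtom

/-- A rule `head ← body`. -/
structure Rule where
  head : MAtom
  body : List MAtom
deriving DecidableEq

/-- A program is a set of rules (finiteness is part of `ProgramWF`). -/
abbrev Program := Set Rule

/-- A substitution maps variable names to constant names. -/
abbrev Subst := String → String

/-- A fact `R(c)@ϱ`. -/
structure TFact where
  pred : PredSym
  args : List String
  ivl : Ivl
deriving DecidableEq

/-- A dataset is a set of facts (finiteness is part of `DatasetWF`). -/
abbrev Dataset := Set TFact

/-- An interpretation maps each rational time point to a set of ground
relational atoms (predicate together with a tuple of constants). -/
abbrev Interp := ℚ → Set (PredSym × List String)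

/-- Satisfaction of a (ground) metric atom at a time point. -/
def satAt (ℑ : Interp) : ℚ → MAtom → Prop
  | _, .top => True
  | _, .bot => False
  | t, .rel p ts => ∃ cs : List String, ts = cs.map Term.const ∧ (p, cs) ∈ ℑ t
  | t, .boxPlus ρ M => ∀ t₁ : ℚ, Ivl.mem (t₁ - t) ρ → satAt ℑ t₁ M
  | t, .boxMinus ρ M => ∀ t₁ : ℚ, Ivl.mem (t - t₁) ρ → satAt ℑ t₁ M
  | t, .diaPlus ρ M => ∃ t₁ : ℚ, Ivl.mem (t₁ - t) ρ ∧ satAt ℑ t₁ M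
  | t, .diaMinus ρ M => ∃ t₁ : ℚ, Ivl.mem (t - t₁) ρ ∧ satAt ℑ t₁ M
  | t, .until_ ρ M₂ M₁ =>
      ∃ t₁ : ℚ, Ivl.mem (t₁ - t) ρ ∧ satAt ℑ t₁ M₁ ∧
        ∀ t₂ : ℚ, t < t₂ → t₂ < t₁ → satAt ℑ t₂ M₂
  | t, .since_ ρ M₂ M₁ =>
      ∃ t₁ : ℚ, Ivl.mem (t - t₁) ρ ∧ satAt ℑ t₁ M₁ ∧
        ∀ t₂ : ℚ, t₁ < t₂ → t₂ < t → satAt ℑ t₂ M₂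

/-- Satisfaction of a fact. -/
def satFact (ℑ : Interp) (g : TFact) : Prop :=
  ∀ t : ℚ, Ivl.mem t g.ivl → (g.pred, g.args) ∈ ℑ t

/-- An interpretation satisfies a rule if it satisfies all its ground instances. -/
def modelsRule (ℑ : Interp) (r : Rule) : Prop :=
  ∀ σ : Subst, ∀ t : ℚ,
    (∀ M ∈ r.body, satAt ℑ t (M.subst σ)) → satAt ℑ t (r.head.subst σ)

/-- model of a program -/
def modelsProg (ℑ : Interp) (P : Program) : Prop := ∀ r ∈ P, modelsRule ℑ r

/-- model of a dataset -/
def modelsData (ℑ : Interp) (D : Dataset) : Prop := ∀ g ∈ D, satFact ℑ g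

/-- Entailment `(P, D) ⊨ g`. -/
def entails (P : Program) (D : Dataset) (g : TFact) : Prop :=
  ∀ ℑ : Interp, modelsProg ℑ P → modelsData ℑ D → satFact ℑ g

/-- The least model `ℑ_D` of a dataset. -/
def leastModel (D : Dataset) : Interp :=
  fun t => {a | ∃ g ∈ D, g.pred = a.1 ∧ g.args = a.2 ∧ Ivl.mem t g.ivl}

/-- The immediate consequence operator `T_P`: the least interpretation
containing `ℑ` such that whenever the body of a ground instance of a rule of
`P` holds in `ℑ` at `t`, its head holds in the result at `t`. -/
def TP (P : Program) (ℑ : Interp) : Interp :=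
  fun t =>
    ⋂ J ∈ {J : Interp |
      (∀ u : ℚ, ℑ u ⊆ J u) ∧
      ∀ r ∈ P, ∀ σ : Subst, ∀ u : ℚ,
        (∀ M ∈ r.body, satAt ℑ u (M.subst σ)) → satAt J u (r.head.subst σ)},
    J t

/-- The (finite) iterates `ℑ₀ = ℑ_D`, `ℑ_{i+1} = T_P(ℑ_i)` of a pair `(P,D)`. -/
def iterates (P : Program) (D : Dataset) : ℕ → Interp
  | 0 => leastModel D
  | n + 1 => TP P (iterates P D n)

/-- `g` has birth round `i` regarding `(P,D)`. -/
def birthEq (g : TFact) (P : Program) (D : Dataset) (i : ℕ) : Prop :=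
  satFact (iterates P D i) g ∧ (i = 0 ∨ ¬ satFact (iterates P D (i - 1)) g)

/-- `g` has a (finite) birth round regarding `(P,D)`. -/
def hasBirth (g : TFact) (P : Program) (D : Dataset) : Prop :=
  ∃ i : ℕ, birthEq g P D i

/-- The canonical interpretation `C_{P,D}` (the least model of `(P,D)`). -/
def canonInterp (P : Program) (D : Dataset) : Interp :=
  fun t => ⋂ J ∈ {J : Interp | modelsProg J P ∧ modelsData J D}, J t

/-- well-formed rule: nonempty body, legal well-formed head and body, safe -/
def RuleWF (r : Rule) : Prop :=
  r.body ≠ [] ∧ r.head.headOK ∧ r.head.WF ∧ (∀ M ∈ r.body, M.WF) ∧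
  (∀ v ∈ r.head.vars, ∃ M ∈ r.body, v ∈ M.vars)

/-- all predicates of the rule are base predicates (magic and adorned
predicates are fresh) -/
def Rule.predsBase (r : Rule) : Prop :=
  ∀ p ∈ r.head.preds ++ r.body.flatMap MAtom.preds, ∃ n, p = PredSym.base n

/-- well-formed program: finite set of well-formed safe rules over base predicates -/
def ProgramWF (P : Program) : Prop :=
  P.Finite ∧ ∀ r ∈ P, RuleWF r ∧ r.predsBase

/-- well-formed dataset: finite set of facts with nonempty intervals, over base
predicates -/
def DatasetWF (D : Dataset) : Prop :=
  D.Finite ∧ ∀ g ∈ D, g.ivl.NE ∧ ∃ n, g.pred = PredSym.base n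

/-- normal form: no nested operators and every head of the form `⊞_ϱ R(s)`
or `⊟_ϱ R(s)` -/
def NormalForm (P : Program) : Prop :=
  ∀ r ∈ P, r.head.headNF ∧ ∀ M ∈ r.body, M.nonNested

/-- bounded program -/
def ProgramBounded (P : Program) : Prop :=
  ∀ r ∈ P, ∀ ρ ∈ r.head.ivls ++ r.body.flatMap MAtom.ivls, ρ.Bounded

/-- bounded dataset -/
def DatasetBounded (D : Dataset) : Prop := ∀ g ∈ D, g.ivl.Bounded

/-! ## The magic-set rewriting -/

/-- `bt(s,γ)`: the subsequence of terms of `s` bound according to `γ` -/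
def bt (ts : List Term) (γ : Adornment) : List Term :=
  ((ts.zip γ).filter fun p => p.2).map Prod.fst

/-- `bv(s,γ)`: the subsequence of variables of `s` bound according to `γ` -/
def bv (ts : List Term) (γ : Adornment) : List Term :=
  (bt ts γ).filter fun tm => match tm with | .var _ => true | .const _ => false

/-- `bt` on a ground tuple of constants -/
def btC (cs : List String) (γ : Adornment) : List String :=
  ((cs.zip γ).filter fun p => p.2).map Prod.fst

/-- the adornment of the query: `b` exactly at the positions holding constants -/
def adornOfTerms (ts : List Term) : Adornment :=
  ts.map fun tm => match tm with | .const _ => true | .var _ => false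

/-- adornment of a tuple given the list `B` of bound variables: constants and
variables from `B` are bound -/
def adornTerms (B : List String) (ts : List Term) : Adornment :=
  ts.map fun tm => match tm with | .const _ => true | .var v => B.contains v

/-- the head predicate name of a (normal-form) rule -/
def headName (r : Rule) : Option String :=
  match r.head with
  | .boxPlus _ (.rel (.base n) _) => some n
  | .boxMinus _ (.rel (.base n) _) => some n
  | .rel (.base n) _ => some n
  | _ => none

/-- the argument tuple of the head of a (normal-form) rule -/
def headArgs (r : Rule) : List Term :=
  match r.head with
  | .boxPlus _ (.rel _ ts) => ts
  | .boxMinus _ (.rel _ ts) => ts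
  | .rel _ ts => ts
  | _ => []

/-- `n` is an idb predicate in `P`: it occurs in the head of some rule -/
def isIdbName (P : Program) (n : String) : Prop :=
  ∃ r ∈ P, headName r = some n

/-- adorn a base predicate occurring with argument tuple `ts`, given
bound variables `B` -/
def adornPredOf (B : List String) (p : PredSym) (ts : List Term) : PredSym :=
  match p with
  | .base n => .adorned n (adornTerms B ts)
  | _ => p

/-- adorn all relational atoms of a metric atom, given bound variables `B` -/
def MAtom.adornWith (B : List String) : MAtom → MAtom
  | .top => .top
  | .bot => .bot
  | .rel p ts => .rel (adornPredOf B p ts) ts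
  | .boxPlus ρ M => .boxPlus ρ (M.adornWith B)
  | .boxMinus ρ M => .boxMinus ρ (M.adornWith B)
  | .diaPlus ρ M => .diaPlus ρ (M.adornWith B)
  | .diaMinus ρ M => .diaMinus ρ (M.adornWith B)
  | .until_ ρ M₂ M₁ => .until_ ρ (M₂.adornWith B) (M₁.adornWith B)
  | .since_ ρ M₂ M₁ => .since_ ρ (M₂.adornWith B) (M₁.adornWith B)

/-- adorn the head of a (normal-form) rule with `γ` -/
def adornHead (γ : Adornment) : MAtom → MAtom
  | .boxPlus ρ (.rel (.base n) ts) => .boxPlus ρ (.rel (.adorned n γ) ts)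
  | .boxMinus ρ (.rel (.base n) ts) => .boxMinus ρ (.rel (.adorned n γ) ts)
  | M => M

/-- variables of the head bound according to `γ` -/
def headBoundVars (r : Rule) (γ : Adornment) : List String :=
  (bv (headArgs r) γ).flatMap Term.vars

/-- the adorned version of rule `r` for head adornment `γ`: an occurrence of
a variable in the `i`-th body atom is bound iff the variable is bound in the
head or occurs in a body atom strictly to the left -/
def adornRule (r : Rule) (γ : Adornment) : Rule :=
  ⟨adornHead γ r.head,
   r.body.mapIdx fun i M =>
     M.adornWith (headBoundVars r γ ++ (r.body.take i).flatMap MAtom.vars)⟩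

/-- the adorned idb predicates reachable by the adornment procedure started
from `Q^{γ₀}` -/
inductive Reach (P : Program) (Q : String) (γ₀ : Adornment) :
    String → Adornment → Prop where
  | init : Reach P Q γ₀ Q γ₀
  | step {R : String} {γ : Adornment} {S : String} {γ' : Adornment} (r : Rule) :
      Reach P Q γ₀ R γ → r ∈ P → headName r = some R →
      (∃ M ∈ (adornRule r γ).body, PredSym.adorned S γ' ∈ M.preds) →
      isIdbName P S →
      Reach P Q γ₀ S γ'

/-- the adorned program `P_a` -/
def adornedProg (P : Program) (Q : String) (γ₀ : Adornment) : Set Rule :=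
  {ra | ∃ r ∈ P, ∃ R γ, Reach P Q γ₀ R γ ∧ headName r = some R ∧
    ra = adornRule r γ}

/-- the magic body atom added for an adorned head -/
def magicBodyAtom : MAtom → Option MAtom
  | .boxPlus ρ (.rel (.adorned R γ) s) =>
      some (.diaPlus ρ (.rel (.magic R γ) (bv s γ)))
  | .boxMinus ρ (.rel (.adorned R γ) s) =>
      some (.diaMinus ρ (.rel (.magic R γ) (bv s γ)))
  | _ => none

/-- the rules `P1x` of the first type -/
def magicProg1 (Pa : Set Rule) : Set Rule :=
  {r' | ∃ r ∈ Pa, ∃ m, magicBodyAtom r.head = some m ∧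
    r' = ⟨r.head, m :: r.body⟩}

open Classical in
/-- replacing every adorned idb relational atom `R^γ(s)` by `m_R^γ(bv(s,γ))` -/
noncomputable def magicize (P : Program) : MAtom → MAtom
  | .top => .top
  | .bot => .bot
  | .rel p ts =>
      match p with
      | .adorned n γ =>
          if isIdbName P n then .rel (.magic n γ) (bv ts γ) else .rel (.adorned n γ) ts
      | _ => .rel p ts
  | .boxPlus ρ M => .boxPlus ρ (magicize P M)
  | .boxMinus ρ M => .boxMinus ρ (magicize P M)
  | .diaPlus ρ M => .diaPlus ρ (magicize P M)
  | .diaMinus ρ M => .diaMinus ρ (magicize P M)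
  | .until_ ρ M₂ M₁ => .until_ ρ (magicize P M₂) (magicize P M₁)
  | .since_ ρ M₂ M₁ => .since_ ρ (magicize P M₂) (magicize P M₁)

/-- `MagicHeadAtoms` -/
noncomputable def magicHeadAtoms (P : Program) (M : MAtom) : Set MAtom :=
  match magicize P M with
  | .boxPlus ρ M₁ => {MAtom.boxPlus ρ M₁}
  | .boxMinus ρ M₁ => {MAtom.boxMinus ρ M₁}
  | .diaPlus ρ M₁ => {MAtom.boxPlus ρ M₁}
  | .diaMinus ρ M₁ => {MAtom.boxMinus ρ M₁}
  | .since_ ρ M₂ M₁ =>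
      {A | (M₂.containsMagic ∧ A = MAtom.boxMinus ⟨some 0, ρ.hi, false, false⟩ M₂) ∨
           (M₁.containsMagic ∧ A = MAtom.boxMinus ρ M₁)}
  | .until_ ρ M₂ M₁ =>
      {A | (M₂.containsMagic ∧ A = MAtom.boxPlus ⟨some 0, ρ.hi, false, false⟩ M₂) ∨
           (M₁.containsMagic ∧ A = MAtom.boxPlus ρ M₁)}
  | M' => {M'}

/-- a (adorned) body atom whose predicate is idb in `P` -/
def atomIdb (P : Program) (M : MAtom) : Prop :=
  ∃ n γ, PredSym.adorned n γ ∈ M.preds ∧ isIdbName P n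

/-- the rules `P2x` of the second type -/
noncomputable def magicProg2 (P : Program) (P1 : Set Rule) : Set Rule :=
  {r' | ∃ r ∈ P1, ∃ i : ℕ, ∃ M, r.body[i]? = some M ∧ atomIdb P M ∧
    ∃ M' ∈ magicHeadAtoms P M, r' = ⟨M', r.body.take i⟩}

/-- deleting adornments from non-magic predicates -/
def PredSym.unadorn : PredSym → PredSym
  | .adorned n _ => .base n
  | p => p

def MAtom.unadorn : MAtom → MAtom
  | .top => .top
  | .bot => .bot
  | .rel p ts => .rel p.unadorn ts
  | .boxPlus ρ M => .boxPlus ρ M.unadorn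
  | .boxMinus ρ M => .boxMinus ρ M.unadorn
  | .diaPlus ρ M => .diaPlus ρ M.unadorn
  | .diaMinus ρ M => .diaMinus ρ M.unadorn
  | .until_ ρ M₂ M₁ => .until_ ρ M₂.unadorn M₁.unadorn
  | .since_ ρ M₂ M₁ => .since_ ρ M₂.unadorn M₁.unadorn

def Rule.unadorn (r : Rule) : Rule :=
  ⟨r.head.unadorn, r.body.map MAtom.unadorn⟩

/-- the program `Pm` produced by `MagicRewriting(P, D, Q(s)@ϱ)`
(it does not depend on `D` nor on `ϱ`) -/
noncomputable def magicProgram (P : Program) (Q : String) (s : List Term) :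
    Set Rule :=
  Rule.unadorn ''
    (magicProg1 (adornedProg P Q (adornOfTerms s)) ∪
     magicProg2 P (magicProg1 (adornedProg P Q (adornOfTerms s))))

def termToConst : Term → String
  | .const c => c
  | .var v => v

/-- the magic fact `m_Q^{γ₀}(bt(s,γ₀))@ϱ` added to the dataset -/
def magicFact (Q : String) (s : List Term) (ρ : Ivl) : TFact :=
  ⟨.magic Q (adornOfTerms s), (bt s (adornOfTerms s)).map termToConst, ρ⟩

/-- the dataset `D′` produced by `MagicRewriting(P, D, Q(s)@ϱ)` -/
def magicDataset (D : Dataset) (Q : String) (s : List Term) (ρ : Ivl) :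
    Dataset :=
  D ∪ {magicFact Q s ρ}

/-- `σ(s)` as a ground tuple of constants -/
def groundTuple (σ : Subst) (s : List Term) : List String :=
  s.map fun tm => match tm with | .var v => σ v | .const c => c

/-- `toRule(R(c)@(−∞,+∞))` is the rule `R(c) ← ⊤` -/
def TFact.toRule (g : TFact) : Rule :=
  ⟨.rel g.pred (g.args.map Term.const), [.top]⟩

/-- `swap(E)` -/
def swapE (E : Set TFact) : Set Rule := TFact.toRule '' E

/-- the rule `m_Q^{γ₀}(bt(s,γ₀)) ← ⊤` -/
def topRule (Q : String) (s : List Term) : Rule :=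
  ⟨.rel (.magic Q (adornOfTerms s)) (bt s (adornOfTerms s)), [.top]⟩

/-- a predicate occurs in a program -/
def predOccursInProg (P : Set Rule) (p : PredSym) : Prop :=
  ∃ r ∈ P, p ∈ r.head.preds ∨ ∃ M ∈ r.body, p ∈ M.preds

/-- a predicate occurs in a dataset -/
def predOccursInData (D : Set TFact) (p : PredSym) : Prop :=
  ∃ g ∈ D, g.pred = p

/-- a magic predicate -/
def PredSym.IsMagic : PredSym → Prop
  | .magic _ _ => True
  | _ => False

/-- Satisfaction of metric atoms is monotone in the interpretation: the language has no negation. -/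
theorem satAt_mono {I J : Interp} (h : ∀ u, I u ⊆ J u) (M : MAtom) :
    ∀ t, satAt I t M → satAt J t M := by
  induction M with
  | top => intro t _; trivial
  | bot => intro t hM; exact hM
  | rel p ts =>
    rintro t ⟨cs, hcs, hm⟩
    exact ⟨cs, hcs, h t hm⟩
  | boxPlus ρ M ih => exact fun t hM t₁ ht => ih t₁ (hM t₁ ht)
  | boxMinus ρ M ih => exact fun t hM t₁ ht => ih t₁ (hM t₁ ht)
  | diaPlus ρ M ih =>
    rintro t ⟨t₁, ht, hM⟩
    exact ⟨t₁, ht, ih t₁ hM⟩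
  | diaMinus ρ M ih =>
    rintro t ⟨t₁, ht, hM⟩
    exact ⟨t₁, ht, ih t₁ hM⟩
  | until_ ρ M₂ M₁ ih₂ ih₁ =>
    rintro t ⟨t₁, ht, hM₁, hM₂⟩
    exact ⟨t₁, ht, ih₁ t₁ hM₁, fun t₂ h₁ h₂ => ih₂ t₂ (hM₂ t₂ h₁ h₂)⟩
  | since_ ρ M₂ M₁ ih₂ ih₁ =>
    rintro t ⟨t₁, ht, hM₁, hM₂⟩
    exact ⟨t₁, ht, ih₁ t₁ hM₁, fun t₂ h₁ h₂ => ih₂ t₂ (hM₂ t₂ h₁ h₂)⟩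

/-- A relational atom over an explicit tuple of constants holds exactly when the corresponding
ground atom is in the interpretation. -/
theorem satAt_rel_const (J : Interp) (t : ℚ) (p : PredSym) (cs : List String) :
    satAt J t (.rel p (cs.map Term.const)) ↔ (p, cs) ∈ J t := by
  have hinj : Function.Injective Term.const := fun a b hab => by injection hab
  constructor
  · rintro ⟨cs', hcs, hm⟩
    rwa [List.map_injective_iff.mpr hinj hcs]
  · exact fun hm => ⟨cs, rfl, hm⟩

theorem subst_rel_eq (σ : Subst) (p : PredSym) (ts : List Term) :
    (MAtom.rel p ts).subst σ = .rel p ((groundTuple σ ts).map Term.const) := by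
  simp only [MAtom.subst, groundTuple, List.map_map]
  congr 1
  apply List.map_congr_left
  intro tm _
  cases tm <;> rfl

theorem subst_toRule_head (σ : Subst) (g : TFact) :
    g.toRule.head.subst σ = .rel g.pred (g.args.map Term.const) := by
  simp only [TFact.toRule, MAtom.subst, List.map_map]
  rfl

/-- Ground instances of legal head atoms are preserved by intersections of interpretations. The
intersection may be over the empty family, since a ground instance of a relational atom is
satisfied by the interpretation in which everything holds. -/
theorem satAt_head_iInter (S : Set Interp) (σ : Subst) (M : MAtom) (hM : M.headOK) :
    ∀ t, (∀ J ∈ S, satAt J t (M.subst σ)) →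
      satAt (fun u => ⋂ J ∈ S, J u) t (M.subst σ) := by
  induction M with
  | top => intro t _; trivial
  | rel p ts =>
    intro t h
    simp only [subst_rel_eq, satAt_rel_const] at h ⊢
    exact Set.mem_iInter₂.mpr h
  | boxPlus ρ M ih => exact fun t h t₁ ht => ih hM t₁ fun J hJ => h J hJ t₁ ht
  | boxMinus ρ M ih => exact fun t h t₁ ht => ih hM t₁ fun J hJ => h J hJ t₁ ht
  | bot | diaPlus | diaMinus | until_ | since_ => exact hM.elim

/-- `T_P(ℑ)` satisfies the head of every instance of a rule of `P` whose body holds in `ℑ`. -/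
theorem satAt_head_TP {P : Program} {I : Interp} {r : Rule} (hr : r ∈ P) (hok : r.head.headOK)
    (σ : Subst) (t : ℚ) (hb : ∀ M ∈ r.body, satAt I t (M.subst σ)) :
    satAt (TP P I) t (r.head.subst σ) :=
  satAt_head_iInter _ σ r.head hok t fun _ hJ => hJ.2 r hr σ t hb

theorem leastModel_union_eq_TP {P : Program} {D : Dataset} (hP : ∀ r ∈ P, r.head.headOK)
    (hfix : TP P (leastModel D) = leastModel D)
    (E : Set TFact) (hE : ∀ g ∈ E, g.ivl.lo = none ∧ g.ivl.hi = none) :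
    leastModel (D ∪ E) = TP (P ∪ swapE E) (leastModel D) := by
  have hDE : ∀ u, leastModel D u ⊆ leastModel (D ∪ E) u := by
    rintro u a ⟨g, hg, h⟩
    exact ⟨g, Or.inl hg, h⟩
  funext t
  apply Set.Subset.antisymm
  · rintro ⟨p, cs⟩ ⟨g, hg, rfl, rfl, ht⟩
    refine Set.mem_iInter₂.mpr fun J hJ => ?_
    rcases hg with hg | hg
    · exact hJ.1 t ⟨g, hg, rfl, rfl, ht⟩
    · -- Any substitution serves, as `toRule g` has no variables.
      have h := hJ.2 g.toRule (Or.inr ⟨g, hg, rfl⟩) id t (by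
        intro M hM
        rw [List.mem_singleton.mp hM]
        trivial)
      rwa [subst_toRule_head, satAt_rel_const] at h
  · refine Set.biInter_subset_of_mem ⟨hDE, ?_⟩
    rintro r (hr | ⟨g, hg, rfl⟩) σ u hb
    · have h := satAt_head_TP hr (hP r hr) σ u hb
      rw [hfix] at h
      exact satAt_mono hDE _ u h
    · rw [subst_toRule_head, satAt_rel_const]
      refine ⟨g, Or.inr hg, rfl, rfl, ?_⟩
      obtain ⟨hlo, hhi⟩ := hE g hg
      simp [Ivl.mem, hlo, hhi]

/-- Theorem 3: if `T_P(ℑ_D) = ℑ_D` and every fact of `E`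
has interval `(−∞,+∞)`, then for `P′ = P ∪ swap(E)` the iterates of
`(P′, D ∪ E)` and of `(P′, D)` satisfy `ℑ′_i = ℑ_{i+1}`. -/
theorem swap_iterates_shift
    (P : Program) (D : Dataset) (hP : ProgramWF P) (hD : DatasetWF D)
    (hfix : TP P (leastModel D) = leastModel D)
    (E : Set TFact) (hE : ∀ g ∈ E, g.ivl.lo = none ∧ g.ivl.hi = none) :
    ∀ i : ℕ,
      iterates (P ∪ swapE E) (D ∪ E) i = iterates (P ∪ swapE E) D (i + 1) := by
  intro i
  induction i with
  | zero => exact leastModel_union_eq_TP (fun r hr => (hP.2 r hr).1.2.1) hfix E hE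
  | succ n ih => exact congrArg (TP (P ∪ swapE E)) ih
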